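/- arXiv:2409.03041 — 2 statements merged into one kernel-verified Lean document; each statement's English description precedes it below -/
import Mathlib

section
/- Let $F : \mathbb{R}^n \to \mathbb{R}^n$ be continuously differentiable, let $u^* \in \mathbb{R}^n$ satisfy $F(u^*) = 0$, let $R \in \mathbb{R}^{m \times n}$ and $P := R^T$, and assume the $m \times m$ matrix $R\, DF(u^*)\, P$ is invertible. Then there exist an open neighborhood $U \subseteq \mathbb{R}^n$ of $u^*$, an open neighborhood $W \subseteq \mathbb{R}^m$ of $0$, and a continuously differentiable map $T : U \to \mathbb{R}^m$ such that $T(u^*) = 0$, for every $u \in U$ the vector $T(u)$ is the unique element $t \in W$ with $R\, F(u - P\, t) = 0$, and the derivative at $u^*$ satisfies $DT(u^*) = \big(R\, DF(u^*)\, P\big)^{-1} R\, DF(u^*)$. -/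
open Matrix

/-!
The correction `T` is the implicit function of `f (u, t) = R F(u - P t)` at `(u*, 0)`. There
`∂f/∂u = R DF(u*)` and `∂f/∂t = -R DF(u*) P`, so invertibility of `R DF(u*) P` is exactly the
hypothesis of the implicit function theorem, and the two minus signs cancel in
`DT(u*) = -(∂f/∂t)⁻¹ ∂f/∂u`.
-/

open scoped Topology ContDiff

section Neg

variable {𝕜 E G : Type*} [Ring 𝕜]
  [AddCommGroup E] [TopologicalSpace E] [Module 𝕜 E]
  [AddCommGroup G] [TopologicalSpace G] [IsTopologicalAddGroup G] [Module 𝕜 G]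

theorem neg_eq_equiv_neg_comp (A : E →L[𝕜] G) :
    -A = (ContinuousLinearEquiv.neg 𝕜 : G ≃L[𝕜] G) ∘L A :=
  rfl

theorem isInvertible_neg_iff {A : E →L[𝕜] G} : (-A).IsInvertible ↔ A.IsInvertible := by
  rw [neg_eq_equiv_neg_comp, ContinuousLinearMap.isInvertible_equiv_comp]

theorem inverse_neg [IsTopologicalAddGroup E] (A : E →L[𝕜] G) : (-A).inverse = -A.inverse := by
  rw [neg_eq_equiv_neg_comp, ContinuousLinearMap.inverse_equiv_comp]
  ext1 y
  exact map_neg A.inverse y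

end Neg

section MulVec

variable {l m n 𝕜 : Type*} [Fintype n]
  [CommRing 𝕜] [TopologicalSpace 𝕜] [IsTopologicalRing 𝕜]

/-- Multiplication of column vectors by a matrix, as a continuous linear map. It turns the matrices
of the Schwarz correction into the operators that differential calculus works with. -/
def mulVecCLM (A : Matrix m n 𝕜) : (n → 𝕜) →L[𝕜] (m → 𝕜) where
  toLinearMap := A.mulVecLin
  cont := continuous_const.matrix_mulVec continuous_id

@[simp]
theorem mulVecCLM_apply (A : Matrix m n 𝕜) (v : n → 𝕜) : mulVecCLM A v = A *ᵥ v :=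
  rfl

theorem mulVecCLM_mul [Fintype m] (A : Matrix l m 𝕜) (B : Matrix m n 𝕜) :
    mulVecCLM (A * B) = mulVecCLM A ∘L mulVecCLM B := by
  ext1 v
  simp

theorem mulVecCLM_one [DecidableEq n] : mulVecCLM (1 : Matrix n n 𝕜) = .id 𝕜 (n → 𝕜) := by
  ext1 v
  simp

variable [DecidableEq n] {A : Matrix n n 𝕜}

theorem mulVecCLM_comp_inv (hA : IsUnit A) : mulVecCLM A ∘L mulVecCLM A⁻¹ = .id 𝕜 (n → 𝕜) := by
  rw [← mulVecCLM_mul, A.mul_nonsing_inv (A.isUnit_iff_isUnit_det.1 hA), mulVecCLM_one]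

theorem mulVecCLM_inv_comp (hA : IsUnit A) : mulVecCLM A⁻¹ ∘L mulVecCLM A = .id 𝕜 (n → 𝕜) := by
  rw [← mulVecCLM_mul, A.nonsing_inv_mul (A.isUnit_iff_isUnit_det.1 hA), mulVecCLM_one]

theorem isInvertible_mulVecCLM (hA : IsUnit A) : (mulVecCLM A).IsInvertible :=
  .of_inverse (mulVecCLM_comp_inv hA) (mulVecCLM_inv_comp hA)

theorem inverse_mulVecCLM (hA : IsUnit A) : (mulVecCLM A).inverse = mulVecCLM A⁻¹ :=
  ContinuousLinearMap.inverse_eq (mulVecCLM_comp_inv hA) (mulVecCLM_inv_comp hA)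

end MulVec

section ImplicitFunction

variable {𝕜 E G H : Type*} [RCLike 𝕜]
  [NormedAddCommGroup E] [NormedSpace 𝕜 E] [CompleteSpace E]
  [NormedAddCommGroup G] [NormedSpace 𝕜 G] [CompleteSpace G]
  [NormedAddCommGroup H] [NormedSpace 𝕜 H] [CompleteSpace H]

theorem exists_isOpen_contDiffOn_implicitFunction {k : ℕ∞ω} {f : E × G → H}
    {f' : E × G →L[𝕜] H} {a : E} {b : G} (hf : ContDiffAt 𝕜 k f (a, b)) (hk₀ : k ≠ 0)
    (hk : k ≠ ∞) (hf' : HasFDerivAt f f' (a, b)) (hinv : (f' ∘L .inr 𝕜 E G).IsInvertible) :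
    ∃ (U : Set E) (W : Set G) (ψ : E → G), IsOpen U ∧ a ∈ U ∧ IsOpen W ∧ b ∈ W ∧
      ContDiffOn 𝕜 k ψ U ∧ ψ a = b ∧
      (∀ x ∈ U, ψ x ∈ W ∧ ∀ y ∈ W, f (x, y) = f (a, b) ↔ ψ x = y) ∧
      HasStrictFDerivAt ψ (-(f' ∘L .inr 𝕜 E G).inverse ∘L (f' ∘L .inl 𝕜 E G)) a := by
  obtain rfl := hf'.fderiv
  set ψ := hf.implicitFunction hk₀ hinv
  have hψa : ψ a = b := hf.implicitFunction_apply_self hk₀ hinv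
  have hψ : ContDiffAt 𝕜 k ψ a := hf.contDiffAt_implicitFunction hk₀ hinv
  have hiff : ∀ᶠ p in 𝓝 a ×ˢ 𝓝 b, f p = f (a, b) ↔ ψ p.1 = p.2 := by
    rw [← nhds_prod_eq]
    exact hf.eventually_apply_eq_iff_implicitFunction hk₀ hinv
  obtain ⟨V, hV, N, hN, hVN⟩ := Filter.eventually_prod_iff.1 hiff
  obtain ⟨W, hWN, hWo, hbW⟩ := eventually_nhds_iff.1 hN
  have hψW : ∀ᶠ x in 𝓝 a, ψ x ∈ W :=
    hψ.continuousAt.eventually_mem (hWo.mem_nhds (hψa.symm ▸ hbW))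
  obtain ⟨U, hU, hUo, haU⟩ := eventually_nhds_iff.1 (hV.and (hψW.and (hψ.eventually hk)))
  exact ⟨U, W, ψ, hUo, haU, hWo, hbW, fun x hx ↦ (hU x hx).2.2.contDiffWithinAt, hψa,
    fun x hx ↦ ⟨(hU x hx).2.1, fun y hy ↦ hVN (hU x hx).1 (hWN y hy)⟩,
    hf.hasStrictFDerivAt_implicitFunction hk₀ hinv⟩

end ImplicitFunction

theorem hasFDerivAt_comp_fst_sub_snd {𝕜 E G H : Type*} [NontriviallyNormedField 𝕜]
    [NormedAddCommGroup E] [NormedSpace 𝕜 E] [NormedAddCommGroup G] [NormedSpace 𝕜 G]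
    [NormedAddCommGroup H] [NormedSpace 𝕜 H] {g : E → H} {g' : E →L[𝕜] H} {P : G →L[𝕜] E}
    {p : E × G} (hg : HasFDerivAt g g' (p.1 - P p.2)) :
    HasFDerivAt (fun q : E × G ↦ g (q.1 - P q.2)) (g'.coprod (-(g' ∘L P))) p := by
  have hsub : HasFDerivAt (fun q : E × G ↦ q.1 - P q.2)
      (.fst 𝕜 E G - P ∘L .snd 𝕜 E G) p :=
    (ContinuousLinearMap.fst 𝕜 E G - P ∘L .snd 𝕜 E G).hasFDerivAt
  refine (hg.comp p hsub).congr_fderiv ?_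
  ext <;> simp

theorem nonlinear_schwarz_correction_exists_general {𝕜 E E' G H : Type*} [RCLike 𝕜]
    [NormedAddCommGroup E] [NormedSpace 𝕜 E] [CompleteSpace E]
    [NormedAddCommGroup E'] [NormedSpace 𝕜 E']
    [NormedAddCommGroup G] [NormedSpace 𝕜 G] [CompleteSpace G]
    [NormedAddCommGroup H] [NormedSpace 𝕜 H] [CompleteSpace H]
    {k : ℕ∞ω} (hk₀ : k ≠ 0) (hk : k ≠ ∞)
    {F : E → E'} {F' : E →L[𝕜] E'} {ustar : E} {R : E' →L[𝕜] H} {P : G →L[𝕜] E}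
    (hF : ContDiffAt 𝕜 k F ustar) (hF' : HasFDerivAt F F' ustar) (hzero : R (F ustar) = 0)
    (hinv : (R ∘L F' ∘L P).IsInvertible) :
    ∃ (U : Set E) (W : Set G) (T : E → G),
      IsOpen U ∧ ustar ∈ U ∧ IsOpen W ∧ 0 ∈ W ∧ ContDiffOn 𝕜 k T U ∧ T ustar = 0 ∧
      (∀ u ∈ U, T u ∈ W ∧ R (F (u - P (T u))) = 0 ∧
        ∀ t ∈ W, R (F (u - P t)) = 0 → t = T u) ∧
      HasStrictFDerivAt T ((R ∘L F' ∘L P).inverse ∘L R ∘L F') ustar := by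
  have hbase : ustar - P 0 = ustar := by simp
  have hf : ContDiffAt 𝕜 k (fun q : E × G ↦ R (F (q.1 - P q.2))) (ustar, 0) :=
    R.contDiff.contDiffAt.comp _ <| ContDiffAt.comp _ (hbase.symm ▸ hF) (by fun_prop)
  have hf' : HasFDerivAt (fun q : E × G ↦ R (F (q.1 - P q.2)))
      ((R ∘L F').coprod (-(R ∘L F' ∘L P))) (ustar, 0) :=
    hasFDerivAt_comp_fst_sub_snd (g := R ∘ F) (hbase.symm ▸ R.hasFDerivAt.comp ustar hF')
  obtain ⟨U, W, T, hU, huU, hW, h0W, hT, hT0, hsol, hT'⟩ :=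
    exists_isOpen_contDiffOn_implicitFunction hf hk₀ hk hf'
      (by rwa [ContinuousLinearMap.coprod_comp_inr, isInvertible_neg_iff])
  simp only [hbase, hzero] at hsol
  refine ⟨U, W, T, hU, huU, hW, h0W, hT, hT0, fun u hu ↦ ?_, ?_⟩
  · obtain ⟨hTW, hiff⟩ := hsol u hu
    exact ⟨hTW, (hiff _ hTW).2 rfl, fun t ht hRt ↦ ((hiff t ht).1 hRt).symm⟩
  · rwa [ContinuousLinearMap.coprod_comp_inl, ContinuousLinearMap.coprod_comp_inr, inverse_neg,
      ContinuousLinearMap.neg_comp, neg_neg] at hT'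

/-- Local existence, uniqueness, and differentiability of the nonlinear Schwarz
correction map `T`, defined implicitly by `R F(u - P T(u)) = 0` with `P = Rᵀ`,
near a zero `u*` of `F`, together with the formula
`DT(u*) = (R DF(u*) P)⁻¹ R DF(u*)`. -/
theorem nonlinear_schwarz_correction_exists {n m : ℕ}
    (F : (Fin n → ℝ) → (Fin n → ℝ)) (hF : ContDiff ℝ 1 F)
    (ustar : Fin n → ℝ) (hzero : F ustar = 0)
    (R : Matrix (Fin m) (Fin n) ℝ)
    (J : Matrix (Fin n) (Fin n) ℝ)
    (hJ : ∀ v, fderiv ℝ F ustar v = J *ᵥ v)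
    (hinv : IsUnit (R * J * Rᵀ)) :
    ∃ (U : Set (Fin n → ℝ)) (W : Set (Fin m → ℝ)) (T : (Fin n → ℝ) → (Fin m → ℝ)),
      IsOpen U ∧ ustar ∈ U ∧ IsOpen W ∧ (0 : Fin m → ℝ) ∈ W ∧
      ContDiffOn ℝ 1 T U ∧ T ustar = 0 ∧
      (∀ u ∈ U, T u ∈ W ∧ R *ᵥ F (u - Rᵀ *ᵥ T u) = 0 ∧
        ∀ t ∈ W, R *ᵥ F (u - Rᵀ *ᵥ t) = 0 → t = T u) ∧
      (∀ v, fderiv ℝ T ustar v = (R * J * Rᵀ)⁻¹ *ᵥ (R *ᵥ (J *ᵥ v))) := by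
  have hF' : HasFDerivAt F (mulVecCLM J) ustar :=
    (hF.differentiable one_ne_zero ustar).hasFDerivAt.congr_fderiv (ContinuousLinearMap.ext hJ)
  have hcomp : mulVecCLM R ∘L mulVecCLM J ∘L mulVecCLM Rᵀ = mulVecCLM (R * J * Rᵀ) := by
    simp only [mulVecCLM_mul, ContinuousLinearMap.comp_assoc]
  obtain ⟨U, W, T, hU, huU, hW, h0W, hT, hT0, hsol, hT'⟩ :=
    nonlinear_schwarz_correction_exists_general one_ne_zero (by simp) hF.contDiffAt hF'
      (R := mulVecCLM R) (by simp [hzero]) (hcomp ▸ isInvertible_mulVecCLM hinv)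
  rw [hcomp, inverse_mulVecCLM hinv] at hT'
  exact ⟨U, W, T, hU, huU, hW, h0W, hT, hT0, hsol, fun v ↦ by rw [hT'.hasFDerivAt.fderiv]; rfl⟩
end

section
/- Let $F : \mathbb{R}^n \to \mathbb{R}^n$ be continuously differentiable, $R \in \mathbb{R}^{m \times n}$, $P := R^T$, $U \subseteq \mathbb{R}^n$ open, and let $T : U \to \mathbb{R}^m$ be a differentiable map satisfying $R\, F(u - P\, T(u)) = 0$ for all $u \in U$. Fix $u \in U$ and set $w := u - P\, T(u)$. If the $m \times m$ matrix $R\, DF(w)\, P$ is invertible, then $DT(u) = \big(R\, DF(w)\, P\big)^{-1} R\, DF(w)$. -/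
open Matrix

/-!
Write `d x` for the increment of the corrected point `x - P (T x)` from its value at `u`. Since
`R ∘ F` is constant along the corrected points, `R (F' (d x)) = o(d x)`. Expanding `d x` and
applying a left inverse `S` of `R F' P` turns this into
`T x - T u - S R F' (x - u) = o(d x)`. In turn `d x` differs from a bounded linear function of
`x - u` by the image under `P` of this remainder, so `d x = O(x - u)`. The remainder is then
`o(x - u)`, which says that `T` has derivative `S R F'` at `u`.
-/

open Asymptotics Filter Topology

theorem inv_mulVec_mulVec_mulVec_mulVec_of_isUnit {K l m n : Type*} [CommRing K]
    [Fintype l] [Fintype m] [Fintype n] [DecidableEq m]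
    {R : Matrix m l K} {J : Matrix l n K} {P : Matrix n m K}
    (h : IsUnit (R * J * P)) (y : m → K) :
    (R * J * P)⁻¹ *ᵥ (R *ᵥ (J *ᵥ (P *ᵥ y))) = y := by
  have h_det : IsUnit (R * J * P).det := (isUnit_iff_isUnit_det _).1 h
  calc
    (R * J * P)⁻¹ *ᵥ (R *ᵥ (J *ᵥ (P *ᵥ y))) = ((R * J * P)⁻¹ * (R * J * P)) *ᵥ y := by
      simp only [mulVec_mulVec, Matrix.mul_assoc]
    _ = y := by rw [nonsing_inv_mul _ h_det, one_mulVec]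

section

variable {𝕜 E V W : Type*} [NontriviallyNormedField 𝕜]
  [NormedAddCommGroup E] [NormedSpace 𝕜 E]
  [NormedAddCommGroup V] [NormedSpace 𝕜 V]
  [NormedAddCommGroup W] [NormedSpace 𝕜 W]

theorem isLittleO_fderiv_sub_of_eventually_apply_eq_const {X : Type*} [TopologicalSpace X]
    {G : E → V} {G' : E →L[𝕜] V} {g : X → E} {u : X} {c : V}
    (hG : HasFDerivAt G G' (g u)) (hg : ContinuousAt g u) (hc : ∀ᶠ x in 𝓝 u, G (g x) = c) :
    (fun x ↦ G' (g x - g u)) =o[𝓝 u] fun x ↦ g x - g u := by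
  refine (hG.isLittleO.comp_tendsto hg).neg_left.congr' ?_ .rfl
  filter_upwards [hc] with x hx
  simp [hx, hc.self_of_nhds]

theorem hasFDerivAt_of_isLittleO_sub_correction {A : E →L[𝕜] V} {P : W →L[𝕜] E}
    {S : V →L[𝕜] W} {T : E → W} {u : E} (hS : S ∘L A ∘L P = .id 𝕜 W)
    (hA : (fun x ↦ A (x - P (T x) - (u - P (T u)))) =o[𝓝 u]
      fun x ↦ x - P (T x) - (u - P (T u))) :
    HasFDerivAt T (S ∘L A) u := by
  let d : E → E := fun x ↦ x - P (T x) - (u - P (T u))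
  let r : E → W := fun x ↦ T x - T u - (S ∘L A) (x - u)
  have neg_S_A_d (x : E) : -S (A (d x)) = r x := by
    have S_A_P (y : W) : S (A (P y)) = y := DFunLike.congr_fun hS y
    simp only [r, d, map_sub, S_A_P, ContinuousLinearMap.comp_apply]
    abel
  have r_isLittleO_d : r =o[𝓝 u] d :=
    ((S.isBigO_comp _ _).trans_isLittleO hA).neg_left.congr_left neg_S_A_d
  have P_r_add_d (x : E) : P (r x) + d x = (.id 𝕜 E - P ∘L S ∘L A) (x - u) := by
    simp only [r, d, map_sub, ContinuousLinearMap.comp_apply, _root_.sub_apply,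
      ContinuousLinearMap.id_apply]
    abel
  have d_isBigO : d =O[𝓝 u] fun x ↦ x - u :=
    calc
      d =O[𝓝 u] fun x ↦ P (r x) + d x :=
        ((P.isBigO_comp _ _).trans_isLittleO r_isLittleO_d).right_isBigO_add
      _ =O[𝓝 u] fun x ↦ x - u := by
        simpa only [P_r_add_d] using ContinuousLinearMap.isBigO_comp _ _ _
  exact .of_isLittleO (r_isLittleO_d.trans_isBigO d_isBigO)

theorem nonlinear_schwarz_correction_deriv_general {E' : Type*} [NormedAddCommGroup E']
    [NormedSpace 𝕜 E'] {F : E → E'} {F' : E →L[𝕜] E'} {R : E' →L[𝕜] V} {P : W →L[𝕜] E}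
    {S : V →L[𝕜] W} {T : E → W} {u : E} {c : V}
    (hF : HasFDerivAt F F' (u - P (T u))) (hT : ContinuousAt T u)
    (hc : ∀ᶠ x in 𝓝 u, R (F (x - P (T x))) = c) (hS : S ∘L (R ∘L F') ∘L P = .id 𝕜 W) :
    HasFDerivAt T (S ∘L R ∘L F') u :=
  have continuousAt_corrected : ContinuousAt (fun x ↦ x - P (T x)) u :=
    continuousAt_id.sub (P.continuous.continuousAt.comp hT)
  hasFDerivAt_of_isLittleO_sub_correction hS <|
    isLittleO_fderiv_sub_of_eventually_apply_eq_const (R.hasFDerivAt.comp _ hF)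
      continuousAt_corrected hc

end

/-- Derivative formula for an implicitly defined nonlinear Schwarz correction:
if `R F(u - Rᵀ T(u)) = 0` on an open set `U`, `w = u - Rᵀ T(u)`, and
`R DF(w) Rᵀ` is invertible, then `DT(u) = (R DF(w) Rᵀ)⁻¹ R DF(w)`. -/
theorem nonlinear_schwarz_correction_deriv {n m : ℕ}
    (F : (Fin n → ℝ) → (Fin n → ℝ)) (hF : ContDiff ℝ 1 F)
    (R : Matrix (Fin m) (Fin n) ℝ)
    (U : Set (Fin n → ℝ)) (hU : IsOpen U)
    (T : (Fin n → ℝ) → (Fin m → ℝ))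
    (hTdiff : ∀ u ∈ U, DifferentiableAt ℝ T u)
    (heq : ∀ u ∈ U, R *ᵥ F (u - Rᵀ *ᵥ T u) = 0)
    (u : Fin n → ℝ) (hu : u ∈ U)
    (w : Fin n → ℝ) (hw : w = u - Rᵀ *ᵥ T u)
    (J : Matrix (Fin n) (Fin n) ℝ)
    (hJ : ∀ v, fderiv ℝ F w v = J *ᵥ v)
    (hinv : IsUnit (R * J * Rᵀ)) :
    ∀ v, fderiv ℝ T u v = (R * J * Rᵀ)⁻¹ *ᵥ (R *ᵥ (J *ᵥ v)) := by
  subst hw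
  have fderiv_F : fderiv ℝ F (u - Rᵀ *ᵥ T u) = J.mulVecLin.toContinuousLinearMap :=
    ContinuousLinearMap.ext hJ
  exact DFunLike.congr_fun (nonlinear_schwarz_correction_deriv_general
    (F' := J.mulVecLin.toContinuousLinearMap) (R := R.mulVecLin.toContinuousLinearMap)
    (P := Rᵀ.mulVecLin.toContinuousLinearMap)
    (S := (R * J * Rᵀ)⁻¹.mulVecLin.toContinuousLinearMap)
    (fderiv_F ▸ (hF.differentiable one_ne_zero _).hasFDerivAt) (hTdiff u hu).continuousAt
    (eventually_of_mem (hU.mem_nhds hu) heq)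
    (ContinuousLinearMap.ext (inv_mulVec_mulVec_mulVec_mulVec_of_isUnit hinv))).fderiv
end
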